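/- There exists a constant C > 0, depending only on n, such that for every λ > 0 and every smooth ℤⁿ-periodic φ : ℝⁿ → ℝ with Δφ = −λ²φ and ∫_Q φ(x)² dx = 1, one has ∫_Q |φ(x)| dx ≥ C λ^{−(n−1)/4}. -/

import Mathlib

/-!
The bound follows from the sup-norm estimate `‖φ‖_∞ ≤ C λ^((n-1)/2) ‖φ‖_1` (`eigen_sup_bound`),
since `1 = ∫_Q φ² ≤ ‖φ‖_∞ ‖φ‖_1`.

For the sup-norm estimate, Green's formula on the torus shows that `φ` is a finite trigonometric
polynomial whose frequencies `k ∈ ℤⁿ` all have the same length `R = λ / 2π` (`eigen_expansion`);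
as `φ ≠ 0`, the integer `R²` is at least `1`. Convolution with any radial kernel therefore
multiplies `φ` by a scalar. The kernel used is, up to a constant and a power of `t`, the Poisson
kernel `t (t² + |y|²)^(-(n+1)/2)` at the complex time `t = ε + iτ`, with `ε = 1 / R` and
`τ ∈ [1, 2]`. Writing it as a superposition of complex Gaussians gives its Fourier
transform (`poissonK_fourier`), a power of `t` times `exp (-2π t R)`, whose modulus is bounded below
because `ε R = 1`.

Taking absolute values gives `|φ x| ≤ C ∫ |K_t y| |φ (x + y)| dy` for every `τ ∈ [1, 2]`. The kernel
is large only near the sphere `|y| = τ`, so averaging over `τ` improves its pointwise size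
`ε^(-(n+1)/2)` to `ε^(-(n-1)/2) (1 + |y|)^(-(n+1))` (`lintegral_poissonK`). This weight is
integrable, and integrating the periodic function `|φ|` against it costs at most a constant times
`∫_Q |φ|` (`lintegral_weight_le`).
-/

open MeasureTheory Real Set

noncomputable section

/-- The Euclidean Laplacian `Δφ = Σᵢ ∂²φ/∂xᵢ²`. -/
def lap {n : ℕ} (φ : EuclideanSpace ℝ (Fin n) → ℝ) (x : EuclideanSpace ℝ (Fin n)) : ℝ :=
  ∑ i : Fin n,
    fderiv ℝ (fun y => fderiv ℝ φ y (EuclideanSpace.single i 1)) x (EuclideanSpace.single i 1)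

/-- `ℤⁿ`-periodicity of a function on `ℝⁿ`. -/
def ZPeriodic {n : ℕ} (φ : EuclideanSpace ℝ (Fin n) → ℝ) : Prop :=
  ∀ (x : EuclideanSpace ℝ (Fin n)) (k : Fin n → ℤ),
    φ (x + (WithLp.equiv 2 (Fin n → ℝ)).symm fun i => (k i : ℝ)) = φ x

/-- The fundamental domain `Q = [0,1)ⁿ`. -/
def Qcube (n : ℕ) : Set (EuclideanSpace ℝ (Fin n)) :=
  {x | ∀ i, x i ∈ Set.Ico (0 : ℝ) 1}

/-! ### Gaussian integrals with complex parameter -/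

/-- The inverse of the substitution `w = v - b / v` on `v > 0`. -/
lemma sqrt_sub_helper {b : ℝ} (hb : 0 < b) (w : ℝ) :
    0 < (w + √(w ^ 2 + 4 * b)) / 2 ∧
      (w + √(w ^ 2 + 4 * b)) / 2 - b / ((w + √(w ^ 2 + 4 * b)) / 2) = w := by
  have h1 : |w| < √(w ^ 2 + 4 * b) := by
    rw [← Real.sqrt_sq_eq_abs]
    exact Real.sqrt_lt_sqrt (sq_nonneg _) (by linarith)
  have h2 : √(w ^ 2 + 4 * b) ^ 2 = w ^ 2 + 4 * b := Real.sq_sqrt (by positivity)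
  have h3 : 0 < (w + √(w ^ 2 + 4 * b)) / 2 := by
    have := neg_abs_le w
    linarith
  refine ⟨h3, ?_⟩
  rw [sub_eq_iff_eq_add, ← sub_eq_iff_eq_add', eq_div_iff h3.ne']
  linarith

lemma integral_cauchy_schlomilch {b : ℝ} (hb : 0 < b) (f : ℝ → ℂ) (hf : Integrable f)
    (heven : ∀ x, f (-x) = f x) :
    ∫ v in Ioi (0 : ℝ), f (v - b / v) = (1 / 2) * ∫ w, f w := by
  set g : ℝ → ℝ := fun w => (w + √(w ^ 2 + 4 * b)) / 2 with hg
  have hgp : ∀ w, 0 < g w := fun w => (sqrt_sub_helper hb w).1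
  have hgi : ∀ w, g w - b / g w = w := fun w => (sqrt_sub_helper hb w).2
  have hinj : InjOn g univ := by
    intro x _ y _ hxy
    rw [← hgi x, ← hgi y, hxy]
  have himg : g '' univ = Ioi 0 := by
    ext v
    simp only [image_univ, mem_range, mem_Ioi]
    refine ⟨fun ⟨w, hw⟩ => hw ▸ hgp w, fun hv => ⟨v - b / v, ?_⟩⟩
    have : (v - b / v) ^ 2 + 4 * b = (v + b / v) ^ 2 := by field_simp; ring
    simp only [hg]
    rw [this, Real.sqrt_sq (by positivity)]
    ring
  have hder : ∀ w ∈ univ, HasDerivWithinAt g ((1 + w / √(w ^ 2 + 4 * b)) / 2) univ w := by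
    intro w _
    have h0 : w ^ 2 + 4 * b ≠ 0 := by positivity
    have h1 : HasDerivAt (fun w : ℝ => w ^ 2 + 4 * b) (2 * w) w := by
      simpa using (hasDerivAt_pow 2 w).add_const (4 * b)
    have := ((hasDerivAt_id w).add (h1.sqrt h0)).div_const 2
    refine (this.congr_deriv ?_).hasDerivWithinAt
    congr 2
    rw [mul_div_mul_left _ _ two_ne_zero]
  have hq : ∀ w : ℝ, |w / √(w ^ 2 + 4 * b)| ≤ 1 := by
    intro w
    rw [abs_div, abs_of_nonneg (Real.sqrt_nonneg _)]
    refine div_le_one_of_le₀ ?_ (Real.sqrt_nonneg _)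
    rw [← Real.sqrt_sq_eq_abs]
    exact Real.sqrt_le_sqrt (by linarith)
  rw [← himg, integral_image_eq_integral_abs_deriv_smul MeasurableSet.univ hder hinj]
  simp only [Measure.restrict_univ]
  have hodd : ∫ w : ℝ, ((w / √(w ^ 2 + 4 * b) : ℝ) : ℂ) * f w = 0 := by
    have h := integral_neg_eq_self (fun w : ℝ => ((w / √(w ^ 2 + 4 * b) : ℝ) : ℂ) * f w) volume
    simp only [heven, neg_sq, neg_div, Complex.ofReal_neg, neg_mul, integral_neg] at h
    exact self_eq_neg.mp h.symm
  have hInt : Integrable fun w : ℝ => ((w / √(w ^ 2 + 4 * b) : ℝ) : ℂ) * f w := by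
    refine hf.bdd_mul (c := 1) ?_ ?_
    · apply Measurable.aestronglyMeasurable
      fun_prop
    · refine Filter.Eventually.of_forall fun w => ?_
      rw [Complex.norm_real]
      exact hq w
  calc _ = ∫ w, ((1 / 2) * f w + (1 / 2) * (((w / √(w ^ 2 + 4 * b) : ℝ) : ℂ) * f w)) := by
        congr 1 with w
        rw [hgi, abs_of_nonneg (by linarith [(abs_le.mp (hq w)).1]), Complex.real_smul]
        push_cast
        ring
    _ = _ := by
        rw [integral_add (hf.const_mul _) (hInt.const_mul _), integral_const_mul,
          integral_const_mul, hodd]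
        ring

/-- The Cauchy–Schlömilch substitution `w = v - b / v` evaluates the subordination integral. -/
lemma integral_subordination {b : ℝ} (hb : 0 < b) {t : ℂ} (ht : 0 < t.re) :
    ∫ v in Ioi (0 : ℝ), Complex.exp (-t * ((v : ℂ) ^ 2 + (b : ℂ) ^ 2 / (v : ℂ) ^ 2)) =
      (1 / 2) * ((π / t : ℂ) ^ (1 / 2 : ℂ) * Complex.exp (-2 * t * b)) := by
  have h := integral_cauchy_schlomilch hb (fun w => Complex.exp (-t * (w : ℂ) ^ 2))
    (integrable_cexp_neg_mul_sq ht) (by intro x; simp)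
  rw [integral_gaussian_complex ht] at h
  rw [← mul_assoc, ← h, ← integral_mul_const]
  refine setIntegral_congr_fun measurableSet_Ioi fun v hv => ?_
  have hv' : (v : ℂ) ≠ 0 := by exact_mod_cast (ne_of_gt hv)
  rw [← Complex.exp_add]
  congr 1
  push_cast
  field_simp
  ring

lemma integrableOn_pow_mul_cexp {z : ℂ} (hz : 0 < z.re) (m : ℕ) :
    IntegrableOn (fun v : ℝ => (v : ℂ) ^ m * Complex.exp (-z * (v : ℂ) ^ 2)) (Ioi 0) := by
  have h := integrableOn_rpow_mul_exp_neg_mul_sq hz (s := (m : ℝ))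
    (by have : (0 : ℝ) ≤ m := by positivity
        linarith)
  refine Integrable.mono' h ?_ ?_
  · apply Measurable.aestronglyMeasurable
    fun_prop
  · refine (ae_restrict_iff' measurableSet_Ioi).mpr (Filter.Eventually.of_forall fun v hv => ?_)
    rw [norm_mul, norm_cexp_neg_mul_sq, norm_pow, Complex.norm_real, Real.norm_of_nonneg
      (le_of_lt hv), Real.rpow_natCast]

lemma integral_pow_cexp_succ {z : ℂ} (hz : 0 < z.re) (m : ℕ) :
    2 * z * ∫ v in Ioi (0 : ℝ), (v : ℂ) ^ (m + 2) * Complex.exp (-z * (v : ℂ) ^ 2) =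
      (m + 1) * ∫ v in Ioi (0 : ℝ), (v : ℂ) ^ m * Complex.exp (-z * (v : ℂ) ^ 2) := by
  have hd : ∀ v : ℝ, HasDerivAt
      (fun v : ℝ => (v : ℂ) ^ (m + 1) * Complex.exp (-z * (v : ℂ) ^ 2))
      ((m + 1) * ((v : ℂ) ^ m * Complex.exp (-z * (v : ℂ) ^ 2)) -
        2 * z * ((v : ℂ) ^ (m + 2) * Complex.exp (-z * (v : ℂ) ^ 2))) v := by
    intro v
    have h1 : HasDerivAt (fun w : ℂ => w ^ (m + 1) * Complex.exp (-z * w ^ 2))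
        ((m + 1) * ((v : ℂ) ^ m * Complex.exp (-z * (v : ℂ) ^ 2)) -
        2 * z * ((v : ℂ) ^ (m + 2) * Complex.exp (-z * (v : ℂ) ^ 2))) (v : ℂ) := by
      have := (hasDerivAt_pow (m + 1) (v : ℂ)).mul
        (((hasDerivAt_pow 2 (v : ℂ)).const_mul (-z)).cexp)
      refine this.congr_deriv ?_
      push_cast
      simp
      ring
    exact h1.comp_ofReal
  have i0 := (integrableOn_pow_mul_cexp hz m).const_mul ((m : ℂ) + 1)
  have i2 := (integrableOn_pow_mul_cexp hz (m + 2)).const_mul (2 * z)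
  have hlim := tendsto_zero_of_hasDerivAt_of_integrableOn_Ioi (a := 0) (fun v _ => hd v)
    (i0.sub i2) (integrableOn_pow_mul_cexp hz (m + 1))
  have key := integral_Ioi_of_hasDerivAt_of_tendsto' (fun v _ => hd v) (i0.sub i2) hlim
  rw [integral_sub i0 i2, integral_const_mul, integral_const_mul] at key
  simp only [Complex.ofReal_zero, ne_eq, Nat.add_eq_zero_iff, one_ne_zero, and_false,
    not_false_eq_true, zero_pow, zero_mul, sub_zero] at key
  exact (sub_eq_zero.mp key).symm

/-- Only the modulus of the Gaussian moment is needed; it follows by recursion in steps of two from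
the moments of order `0` and `1`. -/
lemma norm_integral_pow_cexp (m : ℕ) : ∃ c : ℝ, 0 < c ∧ ∀ z : ℂ, 0 < z.re →
    ‖∫ v in Ioi (0 : ℝ), (v : ℂ) ^ m * Complex.exp (-z * (v : ℂ) ^ 2)‖ =
      c * ‖z‖ ^ (-((m : ℝ) + 1) / 2) := by
  induction m using Nat.twoStepInduction with
  | zero =>
    refine ⟨√π / 2, by positivity, fun z hz => ?_⟩
    have hz0 : 0 < ‖z‖ := norm_pos_iff.mpr (by rintro rfl; simp at hz)
    simp only [pow_zero, one_mul]
    rw [integral_gaussian_complex_Ioi hz, norm_div]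
    have : ((1 : ℂ) / 2) = ((1 / 2 : ℝ) : ℂ) := by push_cast; rfl
    rw [this, Complex.norm_cpow_real, norm_div, Complex.norm_real, Real.norm_of_nonneg pi_pos.le,
      Real.div_rpow pi_pos.le hz0.le, Real.sqrt_eq_rpow]
    have h2 : ‖z‖ ^ (-(((0 : ℕ) : ℝ) + 1) / 2) = (‖z‖ ^ (1 / 2 : ℝ))⁻¹ := by
      rw [← Real.rpow_neg hz0.le]; norm_num
    rw [h2, Complex.norm_two]
    ring
  | one =>
    refine ⟨1 / 2, by positivity, fun z hz => ?_⟩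
    have h2 : ‖z‖ ^ (-(((1 : ℕ) : ℝ) + 1) / 2) = ‖z‖⁻¹ := by
      rw [← Real.rpow_neg_one]; norm_num
    simp only [pow_one]
    rw [integral_mul_cexp_neg_mul_sq hz, h2]
    simp
    ring
  | more m ih _ =>
    obtain ⟨c, hc, h⟩ := ih
    refine ⟨(m + 1) / 2 * c, by positivity, fun z hz => ?_⟩
    have hz0 : 0 < ‖z‖ := norm_pos_iff.mpr (by rintro rfl; simp at hz)
    have hr := congrArg norm (integral_pow_cexp_succ hz m)
    rw [norm_mul, norm_mul, norm_mul, h z hz, Complex.norm_two] at hr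
    have hm : ‖(m : ℂ) + 1‖ = m + 1 := by
      have : (m : ℂ) + 1 = ((m + 1 : ℝ) : ℂ) := by push_cast; rfl
      rw [this, Complex.norm_real, Real.norm_of_nonneg (by positivity)]
    have h2 : ‖z‖ ^ (-(((m + 2 : ℕ) : ℝ) + 1) / 2) = ‖z‖ ^ (-((m : ℝ) + 1) / 2) * ‖z‖⁻¹ := by
      rw [← Real.rpow_neg_one ‖z‖, ← Real.rpow_add hz0]
      congr 1
      push_cast
      ring
    rw [hm] at hr
    rw [h2]
    refine mul_left_cancel₀ (show 2 * ‖z‖ ≠ 0 by positivity) (hr.trans ?_)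
    field_simp

/-! ### The Poisson kernel at complex time -/

/-- Up to a constant and a power of `t`, the Poisson kernel `t / (t² + |y|²) ^ ((n + 1) / 2)` with
complex time `t`, written as a superposition of complex Gaussians. -/
def poissonK (n : ℕ) (t : ℂ) (y : EuclideanSpace ℝ (Fin n)) : ℂ :=
  ∫ v in Ioi (0 : ℝ), (v : ℂ) ^ n * Complex.exp (-(t + (‖y‖ : ℂ) ^ 2 / t) * (v : ℂ) ^ 2)

lemma inv_re_pos {t : ℂ} (ht : 0 < t.re) : 0 < (t⁻¹).re := by
  have hz0 : t ≠ 0 := by rintro rfl; simp at ht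
  rw [Complex.inv_re]
  exact div_pos ht (Complex.normSq_pos.mpr hz0)

/-- The integrand of `poissonK` times a character. -/
def poissonF (n : ℕ) (t : ℂ) (w : EuclideanSpace ℝ (Fin n)) (v : ℝ)
    (y : EuclideanSpace ℝ (Fin n)) : ℂ :=
  ((v : ℂ) ^ n * Complex.exp (-t * (v : ℂ) ^ 2)) *
    Complex.exp (-((v : ℂ) ^ 2 * t⁻¹) * (‖y‖ : ℂ) ^ 2 + (2 * π * Complex.I) * (inner ℝ w y : ℝ))

lemma norm_poissonF {n : ℕ} {t : ℂ} (w : EuclideanSpace ℝ (Fin n))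
    {v : ℝ} (hv : 0 < v) (y : EuclideanSpace ℝ (Fin n)) :
    ‖poissonF n t w v y‖ =
      v ^ n * rexp (-t.re * v ^ 2) * rexp (-(v ^ 2 * (t⁻¹).re) * ‖y‖ ^ 2) := by
  rw [poissonF, norm_mul, norm_mul, norm_cexp_neg_mul_sq, norm_pow, Complex.norm_real,
    Real.norm_of_nonneg hv.le, Complex.norm_exp]
  congr 2
  have h1 : (-((v : ℂ) ^ 2 * t⁻¹) * (‖y‖ : ℂ) ^ 2).re = -(v ^ 2 * (t⁻¹).re) * ‖y‖ ^ 2 := by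
    rw [← Complex.ofReal_pow, ← Complex.ofReal_pow, Complex.re_mul_ofReal, Complex.neg_re,
      Complex.re_ofReal_mul]
  rw [Complex.add_re, h1]
  simp

lemma integrable_poissonF {n : ℕ} {t : ℂ} (ht : 0 < t.re) (w : EuclideanSpace ℝ (Fin n)) :
    Integrable (Function.uncurry (poissonF n t w))
      ((volume.restrict (Ioi (0 : ℝ))).prod volume) := by
  have hti := inv_re_pos ht
  have hmeas : Measurable (Function.uncurry (poissonF n t w)) := by
    unfold poissonF Function.uncurry
    fun_prop
  rw [integrable_prod_iff hmeas.aestronglyMeasurable]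
  refine ⟨?_, ?_⟩
  · refine (ae_restrict_iff' measurableSet_Ioi).mpr (Filter.Eventually.of_forall fun v hv => ?_)
    have hv' : 0 < v := hv
    have : 0 < ((v : ℂ) ^ 2 * t⁻¹).re := by
      rw [← Complex.ofReal_pow, Complex.re_ofReal_mul]
      positivity
    exact (GaussianFourier.integrable_cexp_neg_mul_sq_norm_add this (2 * π * Complex.I) w).const_mul
      ((v : ℂ) ^ n * Complex.exp (-t * (v : ℂ) ^ 2))
  · have h := ((integrableOn_rpow_mul_exp_neg_mul_sq ht (s := 0) (by norm_num)).const_mul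
      ((π / (t⁻¹).re) ^ ((n : ℝ) / 2)))
    refine h.congr ?_
    refine (ae_restrict_iff' measurableSet_Ioi).mpr (Filter.Eventually.of_forall fun v hv => ?_)
    have hv' : 0 < v := hv
    simp only [Function.uncurry]
    simp_rw [norm_poissonF w hv']
    rw [integral_const_mul, GaussianFourier.integral_rexp_neg_mul_sq_norm (by positivity)]
    simp only [finrank_euclideanSpace, Fintype.card_fin]
    have : π / (v ^ 2 * (t⁻¹).re) = (π / (t⁻¹).re) * (v ^ 2)⁻¹ := by field_simp
    rw [this, Real.mul_rpow (by positivity) (by positivity), Real.inv_rpow (by positivity),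
      ← Real.rpow_natCast v 2, ← Real.rpow_mul hv'.le]
    have h3 : ((2 : ℕ) : ℝ) * ((n : ℝ) / 2) = n := by push_cast; ring
    rw [h3, Real.rpow_natCast v n, Real.rpow_zero]
    have hvn : v ^ n ≠ 0 := by positivity
    rw [mul_comm (v ^ n), mul_assoc, mul_left_comm (v ^ n), mul_inv_cancel₀ hvn]
    ring

lemma integral_poissonF_left {n : ℕ} {t : ℂ} (w y : EuclideanSpace ℝ (Fin n)) :
    ∫ v in Ioi (0 : ℝ), poissonF n t w v y =
      poissonK n t y * Complex.exp ((2 * π * Complex.I) * (inner ℝ w y : ℝ)) := by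
  rw [poissonK, ← integral_mul_const]
  congr 1 with v
  rw [poissonF, mul_assoc, mul_assoc _ _ (Complex.exp (_ * ((inner ℝ w y : ℝ) : ℂ))),
    ← Complex.exp_add, ← Complex.exp_add]
  congr 2
  rw [div_eq_mul_inv]
  ring

lemma ofReal_mul_cpow_aux {r : ℝ} (hr : 0 < r) {x : ℂ} (hx : x ≠ 0) (c : ℂ) :
    ((r : ℂ) * x) ^ c = (r : ℂ) ^ c * x ^ c := by
  have hr' : (r : ℂ) ≠ 0 := by exact_mod_cast hr.ne'
  rw [Complex.cpow_def_of_ne_zero (mul_ne_zero hr' hx), Complex.cpow_def_of_ne_zero hr',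
    Complex.cpow_def_of_ne_zero hx, Complex.log_ofReal_mul hr hx, add_mul, Complex.exp_add,
    Complex.ofReal_log hr.le]

lemma integral_poissonF_right {n : ℕ} {t : ℂ} (ht : 0 < t.re) (w : EuclideanSpace ℝ (Fin n))
    {v : ℝ} (hv : 0 < v) :
    ∫ y, poissonF n t w v y = (π * t : ℂ) ^ ((n : ℂ) / 2) *
      Complex.exp (-t * ((v : ℂ) ^ 2 + ((π * ‖w‖ : ℝ) : ℂ) ^ 2 / (v : ℂ) ^ 2)) := by
  have hti := inv_re_pos ht
  have ht0 : t ≠ 0 := by rintro rfl; simp at ht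
  have hv0 : (v : ℂ) ≠ 0 := by exact_mod_cast hv.ne'
  have h1 : 0 < ((v : ℂ) ^ 2 * t⁻¹).re := by
    rw [← Complex.ofReal_pow, Complex.re_ofReal_mul]
    positivity
  simp only [poissonF]
  rw [integral_const_mul, GaussianFourier.integral_cexp_neg_mul_sq_norm_add h1]
  simp only [finrank_euclideanSpace, Fintype.card_fin]
  have h2 : (π / ((v : ℂ) ^ 2 * t⁻¹)) = (((v ^ 2)⁻¹ : ℝ) : ℂ) * (((π : ℝ) : ℂ) * t) := by
    push_cast
    field_simp
  have h3 : ((((v ^ 2)⁻¹ : ℝ) : ℂ)) ^ ((n : ℂ) / 2) = ((v : ℂ) ^ n)⁻¹ := by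
    have : ((n : ℂ) / 2) = (((n : ℝ) / 2 : ℝ) : ℂ) := by push_cast; rfl
    rw [this, ← Complex.ofReal_cpow (by positivity), Real.inv_rpow (by positivity),
      ← Real.rpow_natCast v 2, ← Real.rpow_mul hv.le]
    have h3 : ((2 : ℕ) : ℝ) * ((n : ℝ) / 2) = n := by push_cast; ring
    rw [h3, Real.rpow_natCast]
    push_cast
    rfl
  rw [h2, ofReal_mul_cpow_aux (by positivity) (mul_ne_zero (by exact_mod_cast pi_ne_zero) ht0), h3]
  have h4 : (2 * π * Complex.I) ^ 2 * (‖w‖ : ℂ) ^ 2 / (4 * ((v : ℂ) ^ 2 * t⁻¹)) =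
      -t * (((π * ‖w‖ : ℝ) : ℂ) ^ 2 / (v : ℂ) ^ 2) := by
    push_cast
    rw [mul_pow, Complex.I_sq]
    field_simp
    ring
  rw [h4, mul_add, Complex.exp_add]
  field_simp

/-- The complex-time Poisson kernel multiplies the character of frequency `w` by a factor that
only depends on `‖w‖`, and is explicit. -/
lemma poissonK_fourier {n : ℕ} {t : ℂ} (ht : 0 < t.re) {w : EuclideanSpace ℝ (Fin n)}
    (hw : w ≠ 0) :
    Integrable (fun y => poissonK n t y * Complex.exp ((2 * π * Complex.I) * (inner ℝ w y : ℝ))) ∧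
    ∫ y, poissonK n t y * Complex.exp ((2 * π * Complex.I) * (inner ℝ w y : ℝ)) =
      (π * t : ℂ) ^ ((n : ℂ) / 2) *
        ((1 / 2) * ((π / t : ℂ) ^ (1 / 2 : ℂ) * Complex.exp (-2 * t * ((π * ‖w‖ : ℝ) : ℂ)))) := by
  have hF := integrable_poissonF ht w
  constructor
  · have := hF.integral_prod_right
    refine this.congr (Filter.Eventually.of_forall fun y => ?_)
    exact integral_poissonF_left w y
  · simp_rw [← integral_poissonF_left]
    rw [← integral_integral_swap hF,
      ← integral_subordination (b := π * ‖w‖) (by have := norm_pos_iff.mpr hw; positivity) ht,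
      ← integral_const_mul]
    exact setIntegral_congr_fun measurableSet_Ioi fun v hv => integral_poissonF_right ht w hv

lemma norm_poissonK (n : ℕ) : ∃ c : ℝ, 0 < c ∧ ∀ t : ℂ, 0 < t.re →
    ∀ y : EuclideanSpace ℝ (Fin n),
      ‖poissonK n t y‖ = c * ‖t + (‖y‖ : ℂ) ^ 2 / t‖ ^ (-((n : ℝ) + 1) / 2) := by
  obtain ⟨c, hc, h⟩ := norm_integral_pow_cexp n
  refine ⟨c, hc, fun t ht y => h _ ?_⟩
  have := inv_re_pos ht
  rw [Complex.add_re, div_eq_mul_inv, ← Complex.ofReal_pow, Complex.re_ofReal_mul]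
  positivity

/-- The factorisation `t² + r² = (t + i r) (t - i r)` shows that the kernel is only large near the
sphere `r = τ`. -/
lemma norm_add_div_lower {ε τ r : ℝ} (hε : 0 < ε) (hε1 : ε ≤ 1) (hτ : τ ∈ Icc (1 : ℝ) 2)
    (hr : 0 ≤ r) :
    (1 + r) * (ε + |τ - r|) / 6 ≤
      ‖((ε : ℂ) + τ * Complex.I) + (r : ℂ) ^ 2 / ((ε : ℂ) + τ * Complex.I)‖ := by
  obtain ⟨h1, h2⟩ := hτ
  set t : ℂ := (ε : ℂ) + τ * Complex.I with ht
  have htre : t.re = ε := by simp [ht]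
  have htim : t.im = τ := by simp [ht]
  have ht0 : t ≠ 0 := by
    intro h
    rw [h] at htre
    simp at htre
    linarith
  have hn : 0 < ‖t‖ := norm_pos_iff.mpr ht0
  have hfac : t + (r : ℂ) ^ 2 / t = (t + r * Complex.I) * (t - r * Complex.I) / t := by
    have : (t + r * Complex.I) * (t - r * Complex.I) = t ^ 2 + r ^ 2 := by
      ring_nf
      rw [Complex.I_sq]
      ring
    rw [this]
    field_simp
  have ha : 1 + r ≤ ‖t + r * Complex.I‖ := by
    have := Complex.abs_im_le_norm (t + r * Complex.I)
    simp only [Complex.add_im, htim, Complex.mul_im, Complex.ofReal_re, Complex.I_im, mul_one,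
      Complex.ofReal_im, Complex.I_re, mul_zero, add_zero] at this
    have h3 := le_abs_self (τ + r)
    linarith
  have hb : (ε + |τ - r|) / 2 ≤ ‖t - r * Complex.I‖ := by
    have h3 := Complex.abs_im_le_norm (t - r * Complex.I)
    have h4 := Complex.abs_re_le_norm (t - r * Complex.I)
    simp only [Complex.sub_im, htim, Complex.mul_im, Complex.ofReal_re, Complex.I_im, mul_one,
      Complex.ofReal_im, Complex.I_re, mul_zero, add_zero] at h3
    simp only [Complex.sub_re, htre, Complex.mul_re, Complex.ofReal_re, Complex.I_re, mul_zero,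
      Complex.ofReal_im, Complex.I_im, mul_one, sub_zero] at h4
    have h5 := le_abs_self ε
    linarith
  have hc : ‖t‖ ≤ 3 := by
    have := Complex.norm_le_abs_re_add_abs_im t
    rw [htre, htim, abs_of_pos hε, abs_of_pos (by linarith)] at this
    linarith
  rw [hfac, norm_div, norm_mul, le_div_iff₀ hn]
  have h6 : 0 ≤ ε + |τ - r| := by positivity
  calc (1 + r) * (ε + |τ - r|) / 6 * ‖t‖ ≤ (1 + r) * (ε + |τ - r|) / 6 * 3 := by gcongr
    _ = (1 + r) * ((ε + |τ - r|) / 2) := by ring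
    _ ≤ _ := by gcongr

lemma lintegral_bump {p : ℝ} (hp : 1 < p) : ∃ C : ℝ, 0 < C ∧ ∀ ε r : ℝ, 0 < ε → ε ≤ 1 → 0 ≤ r →
    ∫⁻ τ in Icc (1 : ℝ) 2, ENNReal.ofReal ((ε + |τ - r|) ^ (-p)) ≤
      ENNReal.ofReal (C * ε ^ (1 - p) * (1 + r) ^ (-p)) := by
  have hJ : Integrable (fun x : ℝ => (1 + ‖x‖) ^ (-p)) :=
    integrable_one_add_norm (by simpa using hp)
  set J := ∫ x : ℝ, (1 + ‖x‖) ^ (-p) with hJdef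
  have hJ0 : 0 ≤ J := integral_nonneg fun x => by positivity
  refine ⟨(J + 1) * 4 ^ p, by positivity, fun ε r hε hε1 hr => ?_⟩
  have hεp : 1 ≤ ε ^ (1 - p) := Real.one_le_rpow_of_pos_of_le_one_of_nonpos hε hε1 (by linarith)
  rcases le_total r 3 with h3 | h3
  · have hscale : ∀ τ : ℝ, (ε + |τ - r|) ^ (-p) = ε ^ (-p) * (1 + ‖(τ - r) / ε‖) ^ (-p) := by
      intro τ
      rw [← Real.mul_rpow hε.le (by positivity), norm_div, Real.norm_eq_abs,
        Real.norm_of_nonneg hε.le]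
      congr 1
      field_simp
    have hInt : Integrable fun τ : ℝ => ε ^ (-p) * (1 + ‖(τ - r) / ε‖) ^ (-p) :=
      ((hJ.comp_div hε.ne').comp_sub_right r).const_mul _
    have hval : ∫ τ : ℝ, ε ^ (-p) * (1 + ‖(τ - r) / ε‖) ^ (-p) = ε ^ (1 - p) * J := by
      rw [integral_const_mul,
        integral_sub_right_eq_self (fun u : ℝ => (1 + ‖u / ε‖) ^ (-p)) r,
        Measure.integral_comp_div (fun u : ℝ => (1 + ‖u‖) ^ (-p)) ε, abs_of_pos hε, smul_eq_mul,
        sub_eq_add_neg, Real.rpow_add hε, Real.rpow_one]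
      ring
    calc _ ≤ ∫⁻ τ : ℝ, ENNReal.ofReal ((ε + |τ - r|) ^ (-p)) := setLIntegral_le_lintegral _ _
      _ = ENNReal.ofReal (ε ^ (1 - p) * J) := by
          simp_rw [hscale]
          rw [← hval, ofReal_integral_eq_lintegral_ofReal hInt
            (Filter.Eventually.of_forall fun τ => by positivity)]
      _ ≤ _ := by
          apply ENNReal.ofReal_le_ofReal
          have h4 : (4 : ℝ) ^ (-p) ≤ (1 + r) ^ (-p) :=
            Real.rpow_le_rpow_of_nonpos (by linarith) (by linarith) (by linarith)
          have h5 : (4 : ℝ) ^ p * 4 ^ (-p) = 1 := by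
            rw [← Real.rpow_add (by norm_num)]; simp
          calc ε ^ (1 - p) * J ≤ ε ^ (1 - p) * (J + 1) := by gcongr; linarith
            _ = (J + 1) * 4 ^ p * ε ^ (1 - p) * 4 ^ (-p) := by
                linear_combination (-(ε ^ (1 - p) * (J + 1))) * h5
            _ ≤ _ := by gcongr
  · calc _ ≤ ∫⁻ τ in Icc (1 : ℝ) 2, ENNReal.ofReal (4 ^ p * (1 + r) ^ (-p)) := by
          refine setLIntegral_mono measurable_const fun τ hτ => ENNReal.ofReal_le_ofReal ?_
          have h4 : (1 + r) / 4 ≤ ε + |τ - r| := by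
            have := neg_abs_le (τ - r)
            have := hτ.2
            linarith
          calc (ε + |τ - r|) ^ (-p) ≤ ((1 + r) / 4) ^ (-p) :=
                Real.rpow_le_rpow_of_nonpos (by positivity) h4 (by linarith)
            _ = _ := by
                rw [Real.div_rpow (by positivity) (by norm_num), Real.rpow_neg (by norm_num : (0:ℝ) ≤ 4)]
                field_simp
      _ = ENNReal.ofReal (4 ^ p * (1 + r) ^ (-p)) := by
          rw [setLIntegral_const, Real.volume_Icc]
          norm_num
      _ ≤ _ := by
          apply ENNReal.ofReal_le_ofReal
          have : 4 ^ p * (1 + r) ^ (-p) * 1 ≤ 4 ^ p * (1 + r) ^ (-p) * ((J + 1) * ε ^ (1 - p)) := by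
            gcongr
            nlinarith
          linarith

/-- Averaging the absolute value of the kernel over the imaginary time `τ ∈ [1, 2]` gains a full
factor `ε` over the pointwise bound, without any use of oscillation. -/
lemma lintegral_poissonK (n : ℕ) (hn : 2 ≤ n) : ∃ C : ℝ, 0 < C ∧ ∀ ε : ℝ, 0 < ε → ε ≤ 1 →
    ∀ y : EuclideanSpace ℝ (Fin n),
      ∫⁻ τ in Icc (1 : ℝ) 2, ENNReal.ofReal ‖poissonK n ((ε : ℂ) + τ * Complex.I) y‖ ≤
        ENNReal.ofReal (C * ε ^ (-((n : ℝ) - 1) / 2)) *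
          ENNReal.ofReal ((1 + ‖y‖) ^ (-((n : ℝ) + 1))) := by
  obtain ⟨c, hc, hK⟩ := norm_poissonK n
  have hn' : (2 : ℝ) ≤ n := by exact_mod_cast hn
  set p : ℝ := ((n : ℝ) + 1) / 2 with hp
  obtain ⟨C, hC, hB⟩ := lintegral_bump (p := p) (by rw [hp]; linarith)
  refine ⟨c * 6 ^ p * C, by positivity, fun ε hε hε1 y => ?_⟩
  calc _ ≤ ∫⁻ τ in Icc (1 : ℝ) 2, ENNReal.ofReal (c * 6 ^ p * (1 + ‖y‖) ^ (-p)) *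
          ENNReal.ofReal ((ε + |τ - ‖y‖|) ^ (-p)) := by
        refine setLIntegral_mono (by fun_prop) fun τ hτ => ?_
        rw [← ENNReal.ofReal_mul (by positivity)]
        apply ENNReal.ofReal_le_ofReal
        rw [hK _ (by simpa using hε)]
        have h1 := norm_add_div_lower hε hε1 hτ (norm_nonneg y)
        have h2 : -((n : ℝ) + 1) / 2 = -p := by rw [hp]; ring
        rw [h2]
        have h3 : 0 < ε + |τ - ‖y‖| := by positivity
        calc _ ≤ c * ((1 + ‖y‖) * (ε + |τ - ‖y‖|) / 6) ^ (-p) := by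
              refine mul_le_mul_of_nonneg_left ?_ hc.le
              exact Real.rpow_le_rpow_of_nonpos (by positivity) h1 (by rw [hp]; linarith)
          _ = _ := by
              rw [Real.div_rpow (by positivity) (by norm_num), Real.mul_rpow (by positivity) h3.le,
                Real.rpow_neg (by norm_num : (0:ℝ) ≤ 6)]
              field_simp
    _ = ENNReal.ofReal (c * 6 ^ p * (1 + ‖y‖) ^ (-p)) *
          ∫⁻ τ in Icc (1 : ℝ) 2, ENNReal.ofReal ((ε + |τ - ‖y‖|) ^ (-p)) :=
        lintegral_const_mul _ (by fun_prop)
    _ ≤ ENNReal.ofReal (c * 6 ^ p * (1 + ‖y‖) ^ (-p)) *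
          ENNReal.ofReal (C * ε ^ (1 - p) * (1 + ‖y‖) ^ (-p)) := by
        gcongr
        exact hB ε ‖y‖ hε hε1 (norm_nonneg y)
    _ = _ := by
        rw [← ENNReal.ofReal_mul (by positivity), ← ENNReal.ofReal_mul (by positivity)]
        congr 1
        have h1 : (1 + ‖y‖) ^ (-((n : ℝ) + 1)) = (1 + ‖y‖) ^ (-p) * (1 + ‖y‖) ^ (-p) := by
          rw [← Real.rpow_add (by positivity)]
          congr 1
          rw [hp]; ring
        have h2 : -((n : ℝ) - 1) / 2 = 1 - p := by rw [hp]; ring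
        rw [h1, h2]
        ring

/-! ### Integration of periodic functions against a decaying weight -/

lemma measurableSet_Qcube (n : ℕ) : MeasurableSet (Qcube n) := by
  have : Qcube n = ⋂ i, (fun x : EuclideanSpace ℝ (Fin n) => x i) ⁻¹' (Ico (0 : ℝ) 1) := by
    ext x; simp [Qcube]
  rw [this]
  exact MeasurableSet.iInter fun i => (by fun_prop : Measurable _) measurableSet_Ico

lemma volume_Qcube (n : ℕ) : volume (Qcube n) = 1 := by
  have h := (EuclideanSpace.volume_preserving_symm_measurableEquiv_toLp (Fin n)).measure_preimage
    (s := Set.univ.pi fun _ => Ico (0 : ℝ) 1)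
    (MeasurableSet.univ_pi fun _ => measurableSet_Ico).nullMeasurableSet
  rw [Real.volume_pi_Ico] at h
  simp only [sub_zero, ENNReal.ofReal_one, Finset.prod_const_one] at h
  rw [← h]
  congr 1
  ext x
  simp [Qcube]

lemma norm_le_of_mem_Qcube {n : ℕ} {q : EuclideanSpace ℝ (Fin n)} (hq : q ∈ Qcube n) :
    ‖q‖ ≤ n := by
  have h : ∀ i, ‖q i‖ ≤ 1 := fun i => by
    rw [Real.norm_of_nonneg (hq i).1]
    exact (hq i).2.le
  have h1 : ‖q‖ ^ 2 ≤ n := by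
    rw [EuclideanSpace.norm_sq_eq]
    calc ∑ i, ‖q i‖ ^ 2 ≤ ∑ _i : Fin n, (1 : ℝ) :=
          Finset.sum_le_sum fun i _ => pow_le_one₀ (norm_nonneg _) (h i)
      _ = n := by simp
  have h2 : (n : ℝ) ≤ (n : ℝ) ^ 2 := by
    exact_mod_cast Nat.le_self_pow two_ne_zero n
  exact le_of_sq_le_sq (h1.trans h2) (by positivity)

/-- The weight `(1 + |y|) ^ (-(n + 1))` is dominated by its own averages over unit cubes; hence
integrating a periodic function against it costs at most a multiple of the integral over one
period. -/
lemma lintegral_weight_le (n : ℕ) : ∃ C : ℝ, 0 < C ∧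
    ∀ (g : EuclideanSpace ℝ (Fin n) → ENNReal) (I : ENNReal), Measurable g →
      (∀ z, ∫⁻ q in Qcube n, g (z + q) = I) →
      ∀ x, ∫⁻ y, ENNReal.ofReal ((1 + ‖y‖) ^ (-((n : ℝ) + 1))) * g (x + y) ≤
        ENNReal.ofReal C * I := by
  set N : ℝ := (n : ℝ) + 1 with hN
  have hψ : Integrable (fun y : EuclideanSpace ℝ (Fin n) => (1 + ‖y‖) ^ (-N)) :=
    integrable_one_add_norm (by simp [hN])
  set J := ∫ y : EuclideanSpace ℝ (Fin n), (1 + ‖y‖) ^ (-N) with hJ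
  have hJ0 : 0 ≤ J := integral_nonneg fun x => by positivity
  refine ⟨(1 + n) ^ N * (J + 1), by positivity, fun g I hg hI x => ?_⟩
  have hpt : ∀ y q : EuclideanSpace ℝ (Fin n), q ∈ Qcube n →
      (1 + ‖y‖) ^ (-N) ≤ (1 + n) ^ N * (1 + ‖y - q‖) ^ (-N) := by
    intro y q hq
    have h1 := norm_le_of_mem_Qcube hq
    have h2 : 1 + ‖y - q‖ ≤ (1 + n) * (1 + ‖y‖) := by
      have := norm_sub_le y q
      have h3 : (0 : ℝ) ≤ n * ‖y‖ := by positivity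
      nlinarith
    have h3 : ((1 + n : ℝ) * (1 + ‖y‖)) ^ (-N) ≤ (1 + ‖y - q‖) ^ (-N) :=
      Real.rpow_le_rpow_of_nonpos (by positivity) h2 (by simp only [hN]; linarith [Nat.cast_nonneg (α := ℝ) n])
    rw [Real.mul_rpow (by positivity) (by positivity)] at h3
    have h4 : (1 + n : ℝ) ^ N * (1 + n) ^ (-N) = 1 := by
      rw [← Real.rpow_add (by positivity)]; simp
    calc (1 + ‖y‖) ^ (-N) = (1 + n : ℝ) ^ N * ((1 + n) ^ (-N) * (1 + ‖y‖) ^ (-N)) := by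
          rw [← mul_assoc, h4, one_mul]
      _ ≤ _ := by gcongr
  set A : ENNReal := ENNReal.ofReal ((1 + n) ^ N) with hA
  set ψ : EuclideanSpace ℝ (Fin n) → ENNReal := fun y => ENNReal.ofReal ((1 + ‖y‖) ^ (-N)) with hψd
  have hψm : Measurable ψ := by simp only [hψd]; fun_prop
  have hψJ : ∫⁻ u, ψ u = ENNReal.ofReal J :=
    (ofReal_integral_eq_lintegral_ofReal hψ (Filter.Eventually.of_forall fun τ => by positivity)).symm
  calc ∫⁻ y, ψ y * g (x + y)
      ≤ ∫⁻ y, ∫⁻ q in Qcube n, A * (ψ (y - q) * g (x + y)) := by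
        refine lintegral_mono fun y => ?_
        calc ψ y * g (x + y) = ∫⁻ _q in Qcube n, ψ y * g (x + y) := by
              rw [setLIntegral_const, volume_Qcube, mul_one]
          _ ≤ _ := by
              refine setLIntegral_mono' (measurableSet_Qcube n) fun q hq => ?_
              rw [← mul_assoc]
              gcongr
              rw [hA, hψd, ← ENNReal.ofReal_mul (by positivity)]
              exact ENNReal.ofReal_le_ofReal (hpt y q hq)
    _ = ∫⁻ q in Qcube n, ∫⁻ y, A * (ψ (y - q) * g (x + y)) := by
        refine lintegral_lintegral_swap (Measurable.aemeasurable ?_)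
        unfold Function.uncurry
        fun_prop
    _ = ∫⁻ q in Qcube n, ∫⁻ u, A * (ψ u * g (x + u + q)) := by
        congr 1 with q
        rw [← lintegral_add_right_eq_self _ q]
        congr 1 with u
        rw [add_sub_cancel_right, add_assoc]
    _ = ∫⁻ u, ∫⁻ q in Qcube n, A * (ψ u * g (x + u + q)) := by
        refine lintegral_lintegral_swap (Measurable.aemeasurable ?_)
        unfold Function.uncurry
        fun_prop
    _ = ∫⁻ u, A * (ψ u * I) := by
        congr 1 with u
        rw [lintegral_const_mul _ (by fun_prop), lintegral_const_mul _ (by fun_prop), hI]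
    _ = A * (ENNReal.ofReal J * I) := by
        rw [lintegral_const_mul _ (by fun_prop), lintegral_mul_const _ hψm, hψJ]
    _ ≤ _ := by
        rw [hA, ← mul_assoc, ← ENNReal.ofReal_mul (by positivity)]
        gcongr
        linarith

/-! ### Periodic functions and the Fourier expansion of an eigenfunction -/

/-- A `ℤⁿ`-periodic function factors through the torus. -/
lemma exists_torus_lift {n : ℕ} {X : Type*} {f : EuclideanSpace ℝ (Fin n) → X}
    (hf : ∀ x (k : Fin n → ℤ), f (x + WithLp.toLp 2 fun i => (k i : ℝ)) = f x) :
    ∃ F : UnitAddTorus (Fin n) → X,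
      ∀ x : Fin n → ℝ, F (fun i => (x i : UnitAddCircle)) = f (WithLp.toLp 2 x) := by
  have hsurj : Function.Surjective
      (fun (x : Fin n → ℝ) => (fun i => (x i : UnitAddCircle) : UnitAddTorus (Fin n))) := by
    intro y
    choose x hx using fun i => QuotientAddGroup.mk_surjective (y i)
    exact ⟨x, funext hx⟩
  refine ⟨fun y => f (WithLp.toLp 2 (Function.surjInv hsurj y)), fun x => ?_⟩
  set y := Function.surjInv hsurj (fun i => (x i : UnitAddCircle)) with hy
  have h1 : ∀ i, ∃ k : ℤ, y i = x i + k := by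
    intro i
    have h2 : (y i : UnitAddCircle) = (x i : UnitAddCircle) :=
      congrFun (Function.surjInv_eq hsurj (fun i => (x i : UnitAddCircle))) i
    have h3 : ((y i - x i : ℝ) : UnitAddCircle) = 0 := by
      rw [AddCircle.coe_sub, h2, sub_self]
    obtain ⟨k, hk⟩ := (AddCircle.coe_eq_zero_iff _).1 h3
    refine ⟨k, ?_⟩
    simp only [zsmul_eq_mul, mul_one] at hk
    linarith
  choose k hk using h1
  have : WithLp.toLp 2 y = WithLp.toLp 2 x + WithLp.toLp 2 fun i => (k i : ℝ) := by
    ext i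
    simp [hk]
  simp only []
  rw [this, hf]

lemma continuous_torus_lift {n : ℕ} {X : Type*} [TopologicalSpace X]
    {f : EuclideanSpace ℝ (Fin n) → X} (hc : Continuous f) {F : UnitAddTorus (Fin n) → X}
    (hF : ∀ x : Fin n → ℝ, F (fun i => (x i : UnitAddCircle)) = f (WithLp.toLp 2 x)) :
    Continuous F := by
  have hq : IsOpenQuotientMap
      (Pi.map (fun (_ : Fin n) (x : ℝ) => (x : UnitAddCircle))) :=
    IsOpenQuotientMap.piMap fun i => QuotientAddGroup.isOpenQuotientMap_mk
  rw [hq.isQuotientMap.continuous_iff]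
  have : F ∘ Pi.map (fun (_ : Fin n) (x : ℝ) => (x : UnitAddCircle)) =
      fun x => f (WithLp.toLp 2 x) := by
    ext x
    exact hF x
  rw [this]
  exact hc.comp (PiLp.continuous_toLp 2 _)

lemma lintegral_Qcube_add {n : ℕ} {g : EuclideanSpace ℝ (Fin n) → ENNReal}
    (hg : ∀ x (k : Fin n → ℤ), g (x + WithLp.toLp 2 fun i => (k i : ℝ)) = g x)
    (z : EuclideanSpace ℝ (Fin n)) :
    ∫⁻ q in Qcube n, g (z + q) = ∫⁻ q in Qcube n, g q := by
  -- the integral over `z + Q` is one over a half-open box, to which the torus formula applies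
  have key : ∀ (g : EuclideanSpace ℝ (Fin n) → ENNReal) (z : EuclideanSpace ℝ (Fin n)),
      ∫⁻ q in Qcube n, g (z + q) =
        ∫⁻ x in {x : Fin n → ℝ | ∀ i, x i ∈ Ioc (z i) (z i + 1)}, g (WithLp.toLp 2 x) := by
    intro g z
    have hmp := PiLp.volume_preserving_toLp (Fin n)
    have e1 := hmp.setLIntegral_comp_preimage_emb
      (MeasurableEquiv.toLp 2 (Fin n → ℝ)).measurableEmbedding (fun q => g (z + q)) (Qcube n)
    have hmt := measurePreserving_add_left (volume : Measure (Fin n → ℝ)) (WithLp.ofLp z)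
    have e2 := hmt.setLIntegral_comp_preimage_emb
      (MeasurableEquiv.addLeft (WithLp.ofLp z)).measurableEmbedding
      (fun x => g (WithLp.toLp 2 x)) {x : Fin n → ℝ | ∀ i, x i ∈ Ioc (z i) (z i + 1)}
    rw [← e1, ← e2]
    have hs1 : WithLp.toLp 2 ⁻¹' (Qcube n) =
        Set.pi univ fun _ : Fin n => Ico (0 : ℝ) 1 := by
      ext x; simp [Qcube]
    have hs2 : (fun x => WithLp.ofLp z + x) ⁻¹' {x : Fin n → ℝ | ∀ i, x i ∈ Ioc (z i) (z i + 1)} =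
        Set.pi univ fun _ : Fin n => Ioc (0 : ℝ) 1 := by
      ext x; simp
    rw [hs1, hs2]
    refine setLIntegral_congr ?_
    exact (Measure.univ_pi_Ico_ae_eq_Icc (f := fun _ => (0 : ℝ)) (g := fun _ => 1)).trans
      Measure.univ_pi_Ioc_ae_eq_Icc.symm
  obtain ⟨F, hF⟩ := exists_torus_lift hg
  have e0 := key g 0
  simp only [zero_add] at e0
  rw [key g z, e0]
  have h1 := UnitAddTorus.lintegral_preimage F (fun i => z i)
  have h2 := UnitAddTorus.lintegral_preimage F (fun i => (0 : EuclideanSpace ℝ (Fin n)) i)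
  simp only [hF] at h1 h2
  rw [← h1, h2]

/-- Green's formula on the torus for `φ` and the character `exp (-2πi⟨k, ·⟩)`, whose Laplacian is
`-4π²|k|²` times itself: the boundary terms on opposite faces of the cube cancel. -/
lemma eigen_fourierCoeff_aux {n : ℕ} {lam : ℝ} {φ : EuclideanSpace ℝ (Fin n) → ℝ}
    (hφ : ContDiff ℝ (⊤ : ℕ∞) φ)
    (hper : ∀ x (k : Fin n → ℤ), φ (x + WithLp.toLp 2 fun i => (k i : ℝ)) = φ x)
    (hlap : ∀ x, lap φ x = -lam ^ 2 * φ x) (k : Fin n → ℤ) :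
    ((4 * π ^ 2 * ∑ i, (k i : ℝ) ^ 2 - lam ^ 2 : ℝ) : ℂ) *
      ∫ x in Icc (0 : Fin n → ℝ) 1, Complex.exp (-(2 * π * Complex.I) * ∑ j, (k j : ℂ) * x j) *
        (φ (WithLp.toLp 2 x) : ℂ) = 0 := by
  rcases n with _ | m
  · have h0 : φ = fun _ => φ 0 := by
      ext x; congr 1; exact Subsingleton.elim _ _
    have := hlap 0
    simp only [lap, Finset.univ_eq_empty, Finset.sum_empty] at this
    have h1 : lam ^ 2 * φ 0 = 0 := by linarith
    rw [h0]
    simp only [Finset.univ_eq_empty, Finset.sum_empty, mul_zero, zero_sub, Complex.exp_zero,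
      one_mul]
    rcases mul_eq_zero.1 h1 with h | h <;> simp [h]
  set e : (Fin (m + 1) → ℝ) → ℂ := fun x =>
    Complex.exp (-(2 * π * Complex.I) * ∑ j, (k j : ℂ) * x j) with he
  -- the linear form in the exponent of the character
  let L : (Fin (m + 1) → ℝ) →L[ℝ] ℂ := ∑ j, (-(2 * π * Complex.I) * (k j : ℂ)) •
    (Complex.ofRealCLM.comp (ContinuousLinearMap.proj j : (Fin (m + 1) → ℝ) →L[ℝ] ℝ))
  have hL : ∀ x, -(2 * π * Complex.I) * ∑ j, (k j : ℂ) * x j = L x := by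
    intro x
    simp [L, Finset.mul_sum, mul_assoc]
  have heL : e = fun x => Complex.exp (L x) := by
    ext x; rw [he, ← hL]
  have hLs : ∀ i, L (Pi.single i 1) = -(2 * π * Complex.I) * k i := by
    intro i
    rw [← hL]
    congr 1
    rw [Finset.sum_eq_single i]
    · simp
    · intro j _ hj; simp [hj]
    · simp
  have hed : ∀ x, HasFDerivAt e (e x • L) x := by
    intro x
    rw [heL]
    exact L.hasFDerivAt.cexp
  have heper : ∀ (x : Fin (m + 1) → ℝ) (l : Fin (m + 1) → ℤ), e (x + fun i => (l i : ℝ)) = e x := by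
    intro x l
    simp only [he, Pi.add_apply, Complex.ofReal_add, mul_add, Finset.sum_add_distrib,
      Complex.exp_add]
    have : Complex.exp (-(2 * π * Complex.I) * ∑ j, (k j : ℂ) * ((l j : ℝ) : ℂ)) = 1 := by
      rw [Complex.exp_eq_one_iff]
      refine ⟨-∑ j, k j * l j, ?_⟩
      push_cast
      ring
    rw [this, mul_one]
  -- transport of `φ` and its partial derivatives to `Fin (m + 1) → ℝ`
  let T : (Fin (m + 1) → ℝ) →L[ℝ] EuclideanSpace ℝ (Fin (m + 1)) :=
    ((PiLp.continuousLinearEquiv 2 ℝ (fun _ : Fin (m + 1) => ℝ)).symm : _ →L[ℝ] _)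
  have hT : ∀ x, T x = WithLp.toLp 2 x := fun x => rfl
  have hTs : ∀ i, T (Pi.single i 1) = EuclideanSpace.single i 1 := fun i => rfl
  let ψ : (Fin (m + 1) → ℝ) → ℝ := fun x => φ (T x)
  let D : Fin (m + 1) → EuclideanSpace ℝ (Fin (m + 1)) → ℝ :=
    fun i y => fderiv ℝ φ y (EuclideanSpace.single i 1)
  have hD : ∀ i, ContDiff ℝ (⊤ : ℕ∞) (D i) := by
    intro i
    exact (hφ.fderiv_right (m := (⊤ : ℕ∞)) (by simp)).clm_apply contDiff_const
  have hDper : ∀ i x (k : Fin (m + 1) → ℤ),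
      D i (x + WithLp.toLp 2 fun i => (k i : ℝ)) = D i x := by
    intro i x k
    simp only [D]
    rw [← fderiv_comp_add_right]
    simp only [hper]
  have hψd : ∀ x, HasFDerivAt (fun x => ((φ (T x) : ℝ) : ℂ))
      (Complex.ofRealCLM.comp ((fderiv ℝ φ (T x)).comp T)) x := by
    intro x
    have h1 : HasFDerivAt φ (fderiv ℝ φ (T x)) (T x) :=
      (hφ.differentiable (by simp) (T x)).hasFDerivAt
    exact Complex.ofRealCLM.hasFDerivAt.comp x (h1.comp x T.hasFDerivAt)
  have hDd : ∀ i x, HasFDerivAt (fun x => ((D i (T x) : ℝ) : ℂ))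
      (Complex.ofRealCLM.comp ((fderiv ℝ (D i) (T x)).comp T)) x := by
    intro i x
    have h1 : HasFDerivAt (D i) (fderiv ℝ (D i) (T x)) (T x) :=
      ((hD i).differentiable (by simp) (T x)).hasFDerivAt
    exact Complex.ofRealCLM.hasFDerivAt.comp x (h1.comp x T.hasFDerivAt)
  let f : Fin (m + 1) → (Fin (m + 1) → ℝ) → ℂ := fun i x =>
    (D i (T x) : ℂ) * e x + (2 * π * Complex.I * k i) * ((φ (T x) : ℂ) * e x)
  have hfd : ∀ i x, HasFDerivAt (f i) _ x := fun i x =>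
    ((hDd i x).mul (hed x)).add (((hψd x).mul (hed x)).const_mul (2 * π * Complex.I * k i))
  have hdiv := integral_divergence_of_hasFDerivAt_off_countable' (0 : Fin (m + 1) → ℝ) 1
    zero_le_one f _ ∅ countable_empty
    (fun i => (continuous_iff_continuousAt.2 fun x => (hfd i x).continuousAt).continuousOn)
    (fun x _ i => hfd i x)
  have hsum : ∀ x, (∑ i, ((((D i (T x) : ℝ) : ℂ) • (e x • L) +
      e x • (Complex.ofRealCLM.comp ((fderiv ℝ (D i) (T x)).comp T))) +
      (2 * π * Complex.I * k i) • (((φ (T x) : ℝ) : ℂ) • (e x • L) +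
      e x • (Complex.ofRealCLM.comp ((fderiv ℝ φ (T x)).comp T)))) (Pi.single i 1)) =
      ((4 * π ^ 2 * ∑ i, (k i : ℝ) ^ 2 - lam ^ 2 : ℝ) : ℂ) * (e x * (φ (T x) : ℂ)) := by
    intro x
    have h1 : ((∑ i, fderiv ℝ (D i) (T x) (EuclideanSpace.single i 1) : ℝ) : ℂ) =
        ((-lam ^ 2 * φ (T x) : ℝ) : ℂ) := by
      rw [← hlap]; rfl
    push_cast at h1 ⊢
    have h2 : ((4 * π ^ 2 * ∑ i, (k i : ℂ) ^ 2 - lam ^ 2) : ℂ) * (e x * (φ (T x) : ℂ)) =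
      e x * (-lam ^ 2 * φ (T x)) + ∑ i, 4 * π ^ 2 * (k i : ℂ) ^ 2 * (e x * (φ (T x) : ℂ)) := by
      rw [← Finset.sum_mul, ← Finset.mul_sum]
      ring
    rw [h2, ← h1, Finset.mul_sum, ← Finset.sum_add_distrib]
    refine Finset.sum_congr rfl fun i _ => ?_
    simp only [Pi.add_apply, Pi.smul_apply, Function.comp_apply,
      hLs, hTs, smul_eq_mul, Complex.ofRealCLM_apply]
    have hI := Complex.I_sq
    simp only [D]
    linear_combination (-4 * π ^ 2 * (k i : ℂ) ^ 2 * e x * φ (T x)) * hI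
  have hcont : Continuous fun x => ((4 * π ^ 2 * ∑ i, (k i : ℝ) ^ 2 - lam ^ 2 : ℝ) : ℂ) *
      (e x * (φ (T x) : ℂ)) := by
    have h1 : Continuous e := continuous_iff_continuousAt.2 fun x => (hed x).continuousAt
    have h2 : Continuous fun x => (φ (T x) : ℂ) :=
      continuous_iff_continuousAt.2 fun x => (hψd x).continuousAt
    exact continuous_const.mul (h1.mul h2)
  have hface : ∀ i (x : Fin m → ℝ), f i (i.insertNth ((1 : Fin (m + 1) → ℝ) i) x) =
      f i (i.insertNth ((0 : Fin (m + 1) → ℝ) i) x) := by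
    intro i x
    have hx : (i.insertNth ((1 : Fin (m + 1) → ℝ) i) x : Fin (m + 1) → ℝ) =
        (i.insertNth ((0 : Fin (m + 1) → ℝ) i) x : Fin (m + 1) → ℝ) +
          fun j => (((Pi.single i 1 : Fin (m + 1) → ℤ) j : ℤ) : ℝ) := by
      ext j
      refine Fin.succAboveCases i ?_ (fun l => ?_) j
      · simp
      · simp
    rw [hx]
    simp only [f, heper, hT, WithLp.toLp_add, hDper, hper]
  have h3 := hdiv (by
    refine (hcont.continuousOn.integrableOn_compact isCompact_Icc).congr_fun ?_ measurableSet_Icc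
    intro x _
    exact (hsum x).symm)
  simp only [hface, sub_self, Finset.sum_const_zero] at h3
  rw [← integral_const_mul, ← h3]
  refine integral_congr_ae (Filter.Eventually.of_forall fun x => ?_)
  exact (hsum x).symm

lemma finite_lattice_sphere (n : ℕ) (lam : ℝ) :
    {k : Fin n → ℤ | 4 * π ^ 2 * ∑ i, (k i : ℝ) ^ 2 = lam ^ 2}.Finite := by
  refine (Set.finite_Icc (fun _ : Fin n => -⌈|lam|⌉) (fun _ => ⌈|lam|⌉)).subset fun k hk => ?_
  have h : ∀ i, |(k i : ℝ)| ≤ |lam| := by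
    intro i
    rw [← sq_le_sq]
    have h1 : (k i : ℝ) ^ 2 ≤ ∑ i, (k i : ℝ) ^ 2 :=
      Finset.single_le_sum (f := fun i => (k i : ℝ) ^ 2) (fun _ _ => sq_nonneg _)
        (Finset.mem_univ i)
    have h2 : (1 : ℝ) ≤ 4 * π ^ 2 := by nlinarith [Real.pi_gt_three]
    have h3 := mul_le_mul h2 h1 (sq_nonneg _) (by positivity)
    rw [mem_ofPred_eq] at hk
    linarith
  have h2 : ∀ i, |k i| ≤ ⌈|lam|⌉ := by
    intro i
    have := (h i).trans (Int.le_ceil |lam|)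
    exact_mod_cast this
  exact ⟨fun i => (abs_le.1 (h2 i)).1, fun i => (abs_le.1 (h2 i)).2⟩

/-- An eigenfunction on the torus is a finite trigonometric polynomial whose frequencies lie on
the sphere `4π²|k|² = λ²`. -/
lemma eigen_expansion {n : ℕ} {lam : ℝ} {φ : EuclideanSpace ℝ (Fin n) → ℝ}
    (hφ : ContDiff ℝ (⊤ : ℕ∞) φ)
    (hper : ∀ x (k : Fin n → ℤ), φ (x + WithLp.toLp 2 fun i => (k i : ℝ)) = φ x)
    (hlap : ∀ x, lap φ x = -lam ^ 2 * φ x) :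
    ∃ (S : Finset (Fin n → ℤ)) (a : (Fin n → ℤ) → ℂ),
      (∀ k ∈ S, 4 * π ^ 2 * ∑ i, (k i : ℝ) ^ 2 = lam ^ 2) ∧
      ∀ x, (φ x : ℂ) = ∑ k ∈ S, a k * Complex.exp ((2 * π * Complex.I) *
        (inner ℝ (WithLp.toLp 2 fun i => (k i : ℝ)) x : ℝ)) := by
  have hchar : ∀ (k : Fin n → ℤ) (x : Fin n → ℝ),
      UnitAddTorus.mFourier k (fun i => (x i : UnitAddCircle)) =
        Complex.exp ((2 * π * Complex.I) * ∑ j, (k j : ℂ) * x j) := by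
    intro k x
    simp only [UnitAddTorus.mFourier, ContinuousMap.coe_mk, fourier_coe_apply]
    rw [← Complex.exp_sum, Finset.mul_sum]
    congr 1
    refine Finset.sum_congr rfl fun i _ => ?_
    push_cast
    ring
  obtain ⟨F, hF⟩ := exists_torus_lift (f := fun x => (φ x : ℂ)) (fun x k => by rw [hper])
  have hFc : Continuous F :=
    continuous_torus_lift (Complex.continuous_ofReal.comp hφ.continuous) hF
  have hcoef : ∀ k : Fin n → ℤ, 4 * π ^ 2 * ∑ i, (k i : ℝ) ^ 2 ≠ lam ^ 2 →
      UnitAddTorus.mFourierCoeff F k = 0 := by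
    intro k hk
    have h1 := eigen_fourierCoeff_aux hφ hper hlap k
    have h2 : ((4 * π ^ 2 * ∑ i, (k i : ℝ) ^ 2 - lam ^ 2 : ℝ) : ℂ) ≠ 0 := by
      exact_mod_cast sub_ne_zero.2 hk
    have h3 := (mul_eq_zero.1 h1).resolve_left h2
    rw [UnitAddTorus.mFourierCoeff_eq_integral F k 0, ← h3]
    have hs : {x : Fin n → ℝ | ∀ i, x i ∈ Ioc ((0 : Fin n → ℝ) i) ((0 : Fin n → ℝ) i + 1)} =
        Set.pi univ fun _ : Fin n => Ioc (0 : ℝ) 1 := by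
      ext x; simp
    have hae : (Set.pi univ fun _ : Fin n => Ioc (0 : ℝ) 1) =ᵐ[volume] Icc (0 : Fin n → ℝ) 1 :=
      Measure.univ_pi_Ioc_ae_eq_Icc (f := fun _ => (0 : ℝ)) (g := fun _ => 1)
    rw [hs, setIntegral_congr_set hae]
    refine integral_congr_ae (Filter.Eventually.of_forall fun x => ?_)
    simp only [hF, hchar, smul_eq_mul, Pi.neg_apply, Int.cast_neg, neg_mul,
      Finset.sum_neg_distrib, mul_neg]
  let S := (finite_lattice_sphere n lam).toFinset
  have hS : ∀ k ∉ S, UnitAddTorus.mFourierCoeff F k = 0 := by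
    intro k hk
    refine hcoef k fun h => hk ?_
    simpa [S] using h
  have hsum : Summable (UnitAddTorus.mFourierCoeff (⟨F, hFc⟩ : C(UnitAddTorus (Fin n), ℂ))) :=
    summable_of_ne_finset_zero (s := S) hS
  refine ⟨S, UnitAddTorus.mFourierCoeff F, fun k hk => by simpa [S] using hk, fun x => ?_⟩
  have h1 := UnitAddTorus.hasSum_mFourier_series_apply_of_summable hsum
    (fun i => (x i : UnitAddCircle))
  have h2 := h1.unique (hasSum_sum_of_ne_finset_zero (s := S) (fun k hk => by
    have : UnitAddTorus.mFourierCoeff (⟨F, hFc⟩ : C(UnitAddTorus (Fin n), ℂ)) k = 0 := hS k hk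
    rw [this, zero_smul]))
  have h3 : (⟨F, hFc⟩ : C(UnitAddTorus (Fin n), ℂ)) (fun i => (x i : UnitAddCircle)) = (φ x : ℂ) :=
    hF _
  rw [h3] at h2
  rw [h2]
  refine Finset.sum_congr rfl fun k _ => ?_
  rw [hchar, smul_eq_mul]
  congr 4
  simp [PiLp.inner_apply, mul_comm]

/-! ### The sup-norm bound and the conclusion -/

/-- The factor of `poissonK_fourier` is bounded below at `t = 1 / R + iτ`, uniformly in `R`. -/
lemma norm_multiplier_lower {n : ℕ} (hn : 2 ≤ n) {R τ : ℝ} (hR : 1 ≤ R) (hτ : 1 ≤ τ) :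
    (1 / 2) * Real.exp (-2 * π) ≤
      ‖((π : ℂ) * (((1 / R : ℝ) : ℂ) + τ * Complex.I)) ^ ((n : ℂ) / 2) *
        ((1 / 2) * (((π : ℂ) / (((1 / R : ℝ) : ℂ) + τ * Complex.I)) ^ (1 / 2 : ℂ) *
        Complex.exp (-2 * (((1 / R : ℝ) : ℂ) + τ * Complex.I) * ((π * R : ℝ) : ℂ))))‖ := by
  set t : ℂ := ((1 / R : ℝ) : ℂ) + τ * Complex.I with ht
  have htre : t.re = 1 / R := by simp [ht]
  have htim : t.im = τ := by simp [ht]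
  have ht1 : 1 ≤ ‖t‖ := by
    refine le_trans ?_ (Complex.abs_im_le_norm t)
    rw [htim, abs_of_nonneg (by linarith)]
    exact hτ
  have hpi := Real.pi_gt_three
  have e1 : ((n : ℂ) / 2) = (((n : ℝ) / 2 : ℝ) : ℂ) := by push_cast; rfl
  have e2 : (1 / 2 : ℂ) = ((1 / 2 : ℝ) : ℂ) := by push_cast; rfl
  have e3 : ‖Complex.exp (-2 * t * ((π * R : ℝ) : ℂ))‖ = Real.exp (-2 * π) := by
    rw [Complex.norm_exp]
    congr 1
    have : (-2 * t * ((π * R : ℝ) : ℂ)).re = -2 * t.re * (π * R) := by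
      simp [Complex.mul_re]
    rw [this, htre]
    field_simp
  rw [norm_mul, norm_mul, norm_mul, e3, e1, e2, Complex.norm_cpow_real, Complex.norm_cpow_real,
    norm_mul, norm_div, Complex.norm_real, Complex.norm_real, Real.norm_of_nonneg Real.pi_pos.le,
    Real.norm_of_nonneg (by norm_num : (0 : ℝ) ≤ 1 / 2)]
  have h1 : (π * ‖t‖) ^ (1 / 2 : ℝ) ≤ (π * ‖t‖) ^ ((n : ℝ) / 2) := by
    refine Real.rpow_le_rpow_of_exponent_le (by nlinarith) ?_
    have : (2 : ℝ) ≤ n := by exact_mod_cast hn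
    linarith
  have h2 : (π * ‖t‖) ^ (1 / 2 : ℝ) * (π / ‖t‖) ^ (1 / 2 : ℝ) = π := by
    rw [← Real.mul_rpow (by positivity) (by positivity)]
    have : π * ‖t‖ * (π / ‖t‖) = π ^ 2 := by field_simp
    rw [this, ← Real.sqrt_eq_rpow, Real.sqrt_sq Real.pi_pos.le]
  have h3 : 1 ≤ (π * ‖t‖) ^ ((n : ℝ) / 2) * (π / ‖t‖) ^ (1 / 2 : ℝ) := by
    calc (1 : ℝ) ≤ π := by linarith
      _ = _ := h2.symm
      _ ≤ _ := by gcongr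
  have h4 : 0 < Real.exp (-2 * π) := Real.exp_pos _
  nlinarith

/-- Convolution with the kernel reproduces `φ` up to a scalar, as all frequencies have length `R`. -/
lemma integral_poissonK_mul_eigen {n : ℕ} {S : Finset (Fin n → ℤ)} {a : (Fin n → ℤ) → ℂ}
    {φ : EuclideanSpace ℝ (Fin n) → ℝ} {R : ℝ} (hR : 0 < R)
    (hS : ∀ k ∈ S, ‖(WithLp.toLp 2 fun i => (k i : ℝ) : EuclideanSpace ℝ (Fin n))‖ = R)
    (hφ : ∀ x, (φ x : ℂ) = ∑ k ∈ S, a k * Complex.exp ((2 * π * Complex.I) *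
        (inner ℝ (WithLp.toLp 2 fun i => (k i : ℝ)) x : ℝ)))
    {t : ℂ} (ht : 0 < t.re) (x : EuclideanSpace ℝ (Fin n)) :
    ∫ y, poissonK n t y * (φ (x + y) : ℂ) =
      ((π : ℂ) * t) ^ ((n : ℂ) / 2) * ((1 / 2) * (((π : ℂ) / t) ^ (1 / 2 : ℂ) *
        Complex.exp (-2 * t * ((π * R : ℝ) : ℂ)))) * φ x := by
  have hw : ∀ k ∈ S, (WithLp.toLp 2 fun i => (k i : ℝ) : EuclideanSpace ℝ (Fin n)) ≠ 0 := by
    intro k hk h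
    have := hS k hk
    rw [h, norm_zero] at this
    linarith
  have h1 : ∀ y, poissonK n t y * (φ (x + y) : ℂ) =
      ∑ k ∈ S, (a k * Complex.exp ((2 * π * Complex.I) *
        (inner ℝ (WithLp.toLp 2 fun i => (k i : ℝ)) x : ℝ))) *
        (poissonK n t y * Complex.exp ((2 * π * Complex.I) *
        (inner ℝ (WithLp.toLp 2 fun i => (k i : ℝ)) y : ℝ))) := by
    intro y
    rw [hφ, Finset.mul_sum]
    refine Finset.sum_congr rfl fun k _ => ?_
    rw [inner_add_right, Complex.ofReal_add, mul_add, Complex.exp_add]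
    ring
  simp only [h1]
  rw [integral_finsetSum _ fun k hk => ((poissonK_fourier ht (hw k hk)).1).const_mul _, hφ x,
    Finset.mul_sum]
  refine Finset.sum_congr rfl fun k hk => ?_
  rw [integral_const_mul, (poissonK_fourier ht (hw k hk)).2, hS k hk]
  ring

/-- If a constant `A` is dominated, for every imaginary time `τ ∈ [1, 2]`, by the integral of
`|φ (x + ·)|` against the absolute value of the kernel, then it is dominated by the average over
`τ`, hence by the integral of `|φ|` over one period. -/
lemma average_poissonK_le (n : ℕ) (hn : 2 ≤ n) : ∃ C : ℝ, 0 < C ∧ ∀ ε : ℝ, 0 < ε → ε ≤ 1 →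
    ∀ φ : EuclideanSpace ℝ (Fin n) → ℝ, Continuous φ →
      (∀ x (k : Fin n → ℤ), φ (x + WithLp.toLp 2 fun i => (k i : ℝ)) = φ x) →
      ∀ (x : EuclideanSpace ℝ (Fin n)) (A : ENNReal),
        (∀ τ ∈ Icc (1 : ℝ) 2, A ≤
          ∫⁻ y, ENNReal.ofReal ‖poissonK n ((ε : ℂ) + τ * Complex.I) y‖ *
            ENNReal.ofReal |φ (x + y)|) →
        A ≤ ENNReal.ofReal (C * ε ^ (-((n : ℝ) - 1) / 2)) *
          ∫⁻ q in Qcube n, ENNReal.ofReal |φ q| := by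
  obtain ⟨C₁, hC₁, hK⟩ := lintegral_poissonK n hn
  obtain ⟨C₂, hC₂, hW⟩ := lintegral_weight_le n
  obtain ⟨c, hc, hnK⟩ := norm_poissonK n
  refine ⟨C₁ * C₂, by positivity, fun ε hεpos hε1 φ hφc hper x A hpt => ?_⟩
  have hre : ∀ τ : ℝ, 0 < ((ε : ℂ) + τ * Complex.I).re := by
    intro τ; simpa using hεpos
  have hmeas1 : Measurable fun p : ℝ × EuclideanSpace ℝ (Fin n) =>
      ENNReal.ofReal ‖poissonK n ((ε : ℂ) + p.1 * Complex.I) p.2‖ := by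
    have : (fun p : ℝ × EuclideanSpace ℝ (Fin n) =>
        ENNReal.ofReal ‖poissonK n ((ε : ℂ) + p.1 * Complex.I) p.2‖) = fun p =>
        ENNReal.ofReal (c * ‖((ε : ℂ) + p.1 * Complex.I) +
          (‖p.2‖ : ℂ) ^ 2 / ((ε : ℂ) + p.1 * Complex.I)‖ ^ (-((n : ℝ) + 1) / 2)) := by
      ext p
      rw [hnK _ (hre p.1)]
    rw [this]
    fun_prop
  have hmeasτ : ∀ y, Measurable fun τ : ℝ =>
      ENNReal.ofReal ‖poissonK n ((ε : ℂ) + τ * Complex.I) y‖ := by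
    intro y
    have h := hmeas1.comp (measurable_prodMk_right (α := ℝ) (y := y))
    simpa only [Function.comp_def] using h
  have hmeas2 : Measurable fun y => ENNReal.ofReal |φ y| := by
    have := hφc.measurable
    fun_prop
  have hmeas3 : Measurable fun p : ℝ × EuclideanSpace ℝ (Fin n) =>
      ENNReal.ofReal ‖poissonK n ((ε : ℂ) + p.1 * Complex.I) p.2‖ *
        ENNReal.ofReal |φ (x + p.2)| :=
    hmeas1.mul (hmeas2.comp (measurable_snd.const_add x))
  calc A
      = ∫⁻ _ in Icc (1 : ℝ) 2, A := by
        rw [setLIntegral_const, Real.volume_Icc]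
        norm_num
    _ ≤ ∫⁻ τ in Icc (1 : ℝ) 2, ∫⁻ y,
          ENNReal.ofReal ‖poissonK n ((ε : ℂ) + τ * Complex.I) y‖ *
            ENNReal.ofReal |φ (x + y)| := setLIntegral_mono' measurableSet_Icc hpt
    _ = ∫⁻ y, ∫⁻ τ in Icc (1 : ℝ) 2,
          ENNReal.ofReal ‖poissonK n ((ε : ℂ) + τ * Complex.I) y‖ *
            ENNReal.ofReal |φ (x + y)| := lintegral_lintegral_swap hmeas3.aemeasurable
    _ = ∫⁻ y, (∫⁻ τ in Icc (1 : ℝ) 2,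
          ENNReal.ofReal ‖poissonK n ((ε : ℂ) + τ * Complex.I) y‖) *
            ENNReal.ofReal |φ (x + y)| := by
        refine lintegral_congr fun y => ?_
        exact lintegral_mul_const _ (hmeasτ y)
    _ ≤ ∫⁻ y, ENNReal.ofReal (C₁ * ε ^ (-((n : ℝ) - 1) / 2)) *
          (ENNReal.ofReal ((1 + ‖y‖) ^ (-((n : ℝ) + 1))) * ENNReal.ofReal |φ (x + y)|) := by
        refine lintegral_mono fun y => ?_
        rw [← mul_assoc]
        exact mul_le_mul_left (hK ε hεpos hε1 y) _
    _ = ENNReal.ofReal (C₁ * ε ^ (-((n : ℝ) - 1) / 2)) *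
          ∫⁻ y, ENNReal.ofReal ((1 + ‖y‖) ^ (-((n : ℝ) + 1))) * ENNReal.ofReal |φ (x + y)| :=
        lintegral_const_mul' _ _ ENNReal.ofReal_ne_top
    _ ≤ ENNReal.ofReal (C₁ * ε ^ (-((n : ℝ) - 1) / 2)) *
          (ENNReal.ofReal C₂ * ∫⁻ q in Qcube n, ENNReal.ofReal |φ q|) := by
        refine mul_le_mul_right (hW (fun y => ENNReal.ofReal |φ y|) _ hmeas2 ?_ x) _
        intro z
        exact lintegral_Qcube_add (g := fun y => ENNReal.ofReal |φ y|)
          (fun y k => by rw [hper]) z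
    _ = _ := by
        rw [← mul_assoc, ← ENNReal.ofReal_mul (by positivity)]
        congr 2
        ring

/-- Every eigenfunction satisfies `‖φ‖_∞ ≤ C λ^((n-1)/2) ‖φ‖_1`. -/
lemma eigen_sup_bound (n : ℕ) (hn : 2 ≤ n) : ∃ C : ℝ, 0 < C ∧ ∀ lam : ℝ, 0 < lam →
    ∀ φ : EuclideanSpace ℝ (Fin n) → ℝ, ContDiff ℝ (⊤ : ℕ∞) φ →
      (∀ x (k : Fin n → ℤ), φ (x + WithLp.toLp 2 fun i => (k i : ℝ)) = φ x) →
      (∀ x, lap φ x = -lam ^ 2 * φ x) → ∀ x,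
        ENNReal.ofReal |φ x| ≤ ENNReal.ofReal (C * lam ^ (((n : ℝ) - 1) / 2)) *
          ∫⁻ q in Qcube n, ENNReal.ofReal |φ q| := by
  obtain ⟨C₁, hC₁, havg⟩ := average_poissonK_le n hn
  set m : ℝ := (1 / 2) * Real.exp (-2 * π) with hm
  have hmpos : 0 < m := by positivity
  refine ⟨m⁻¹ * C₁, by positivity, fun lam hlam φ hφ hper hlap x => ?_⟩
  by_cases hx : φ x = 0
  · simp [hx]
  obtain ⟨S, a, hS, hexp⟩ := eigen_expansion hφ hper hlap
  have hSne : S.Nonempty := by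
    rw [Finset.nonempty_iff_ne_empty]
    rintro rfl
    have := hexp x
    simp only [Finset.sum_empty, Complex.ofReal_eq_zero] at this
    exact hx this
  set R : ℝ := lam / (2 * π) with hRdef
  have hpi := Real.pi_gt_three
  have hRpos : 0 < R := by positivity
  have hR2 : ∀ k ∈ S, ∑ i, (k i : ℝ) ^ 2 = R ^ 2 := by
    intro k hk
    have := hS k hk
    rw [hRdef, div_pow, eq_div_iff (by positivity), ← this]
    ring
  have hR1 : 1 ≤ R := by
    obtain ⟨k, hk⟩ := hSne
    have h1 := hR2 k hk
    have h2 : (0 : ℝ) < ∑ i, (k i : ℝ) ^ 2 := by rw [h1]; positivity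
    -- a positive integer is at least one
    have h3 : (1 : ℝ) ≤ ∑ i, (k i : ℝ) ^ 2 := by
      have h4 : (0 : ℤ) < ∑ i, (k i) ^ 2 := by exact_mod_cast h2
      exact_mod_cast (show (1 : ℤ) ≤ ∑ i, (k i) ^ 2 from h4)
    nlinarith
  have hSR : ∀ k ∈ S, ‖(WithLp.toLp 2 fun i => (k i : ℝ) : EuclideanSpace ℝ (Fin n))‖ = R := by
    intro k hk
    rw [EuclideanSpace.norm_eq]
    simp only [Real.norm_eq_abs, sq_abs]
    rw [hR2 k hk, Real.sqrt_sq hRpos.le]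
  have hRlam : R ≤ lam := by
    rw [hRdef]
    exact div_le_self hlam.le (by linarith)
  set ε : ℝ := 1 / R with hε
  have hεpos : 0 < ε := by positivity
  have hε1 : ε ≤ 1 := by rw [hε, div_le_one hRpos]; exact hR1
  have hre : ∀ τ : ℝ, 0 < ((ε : ℂ) + τ * Complex.I).re := by
    intro τ; simpa using hεpos
  have hφc := hφ.continuous
  have hpt : ∀ τ ∈ Icc (1 : ℝ) 2, ENNReal.ofReal (m * |φ x|) ≤
      ∫⁻ y, ENNReal.ofReal ‖poissonK n ((ε : ℂ) + τ * Complex.I) y‖ *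
        ENNReal.ofReal |φ (x + y)| := by
    intro τ hτ
    have h1 := integral_poissonK_mul_eigen hRpos hSR hexp (hre τ) x
    have h2 := norm_multiplier_lower hn hR1 hτ.1
    have h3 : m * |φ x| ≤ ‖∫ y, poissonK n ((ε : ℂ) + τ * Complex.I) y * (φ (x + y) : ℂ)‖ := by
      rw [h1, norm_mul, Complex.norm_real, Real.norm_eq_abs]
      exact mul_le_mul_of_nonneg_right h2 (abs_nonneg _)
    calc ENNReal.ofReal (m * |φ x|)
        ≤ ENNReal.ofReal ‖∫ y, poissonK n ((ε : ℂ) + τ * Complex.I) y * (φ (x + y) : ℂ)‖ :=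
          ENNReal.ofReal_le_ofReal h3
      _ = ‖∫ y, poissonK n ((ε : ℂ) + τ * Complex.I) y * (φ (x + y) : ℂ)‖ₑ :=
          ofReal_norm _
      _ ≤ ∫⁻ y, ‖poissonK n ((ε : ℂ) + τ * Complex.I) y * (φ (x + y) : ℂ)‖ₑ :=
          enorm_integral_le_lintegral_enorm _
      _ = _ := by
          refine lintegral_congr fun y => ?_
          rw [← ofReal_norm, norm_mul, ENNReal.ofReal_mul (norm_nonneg _),
            Complex.norm_real, Real.norm_eq_abs]
  have hεR : ε ^ (-((n : ℝ) - 1) / 2) ≤ lam ^ (((n : ℝ) - 1) / 2) := by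
    have h1 : -((n : ℝ) - 1) / 2 = -(((n : ℝ) - 1) / 2) := by ring
    rw [h1, Real.rpow_neg hεpos.le, hε, one_div, Real.inv_rpow hRpos.le, inv_inv]
    have : (2 : ℝ) ≤ n := by exact_mod_cast hn
    exact Real.rpow_le_rpow hRpos.le hRlam (by linarith)
  have hmain := havg ε hεpos hε1 φ hφc hper x _ hpt
  calc ENNReal.ofReal |φ x| = ENNReal.ofReal m⁻¹ * ENNReal.ofReal (m * |φ x|) := by
        rw [← ENNReal.ofReal_mul (by positivity)]
        congr 1
        field_simp
    _ ≤ ENNReal.ofReal m⁻¹ * (ENNReal.ofReal (C₁ * ε ^ (-((n : ℝ) - 1) / 2)) *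
          ∫⁻ q in Qcube n, ENNReal.ofReal |φ q|) := mul_le_mul_right hmain _
    _ = ENNReal.ofReal (m⁻¹ * C₁ * ε ^ (-((n : ℝ) - 1) / 2)) *
          ∫⁻ q in Qcube n, ENNReal.ofReal |φ q| := by
        rw [← mul_assoc, ← ENNReal.ofReal_mul (by positivity)]
        congr 2
        ring
    _ ≤ _ := by
        refine mul_le_mul_left (ENNReal.ofReal_le_ofReal ?_) _
        exact mul_le_mul_of_nonneg_left hεR (by positivity)

lemma integrableOn_Qcube {n : ℕ} {f : EuclideanSpace ℝ (Fin n) → ℝ} (hf : Continuous f) :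
    IntegrableOn f (Qcube n) := by
  obtain ⟨r, hr⟩ : ∃ r : ℝ, Qcube n ⊆ Metric.closedBall 0 r :=
    ⟨_, fun x hx => mem_closedBall_zero_iff.2 (norm_le_of_mem_Qcube hx)⟩
  exact (hf.continuousOn.integrableOn_compact (isCompact_closedBall _ r)).mono_set hr

theorem L1_lower_bound (n : ℕ) (hn : 2 ≤ n) :
    ∃ C : ℝ, 0 < C ∧
      ∀ (lam : ℝ), 0 < lam →
        ∀ (φ : EuclideanSpace ℝ (Fin n) → ℝ), ContDiff ℝ (⊤ : ℕ∞) φ → ZPeriodic φ →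
          (∀ x, lap φ x = -lam ^ 2 * φ x) → (∫ x in Qcube n, (φ x) ^ 2) = 1 →
          (∫ x in Qcube n, |φ x|) ≥ C * lam ^ (-((n : ℝ) - 1) / 4) := by
  obtain ⟨B, hB, hsup⟩ := eigen_sup_bound n hn
  refine ⟨B ^ (-(1 / 2) : ℝ), by positivity, fun lam hlam φ hφ hper hlap hL2 => ?_⟩
  have hφc := hφ.continuous
  set I : ℝ := ∫ x in Qcube n, |φ x| with hI
  have hIint : IntegrableOn (fun x => |φ x|) (Qcube n) := integrableOn_Qcube hφc.abs
  have hI0 : 0 ≤ I := integral_nonneg fun _ => abs_nonneg _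
  have hIl : ∫⁻ q in Qcube n, ENNReal.ofReal |φ q| = ENNReal.ofReal I :=
    (ofReal_integral_eq_lintegral_ofReal hIint
      (Filter.Eventually.of_forall fun _ => abs_nonneg _)).symm
  have hpt : ∀ x, |φ x| ≤ B * lam ^ (((n : ℝ) - 1) / 2) * I := by
    intro x
    have h1 := hsup lam hlam φ hφ hper hlap x
    rw [hIl, ← ENNReal.ofReal_mul (by positivity)] at h1
    exact (ENNReal.ofReal_le_ofReal_iff (by positivity)).1 h1
  have h1 : 1 ≤ B * lam ^ (((n : ℝ) - 1) / 2) * I * I := by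
    calc (1 : ℝ) = ∫ x in Qcube n, (φ x) ^ 2 := hL2.symm
      _ ≤ ∫ x in Qcube n, (B * lam ^ (((n : ℝ) - 1) / 2) * I) * |φ x| := by
          refine setIntegral_mono (integrableOn_Qcube (hφc.pow 2)) (hIint.const_mul _)
            fun x => ?_
          have := mul_le_mul_of_nonneg_right (hpt x) (abs_nonneg (φ x))
          rwa [← sq, sq_abs] at this
      _ = _ := integral_const_mul _ _
  -- both sides of the goal are nonnegative, so it suffices to compare squares
  refine abs_le_of_sq_le_sq' ?_ hI0 |>.2
  have e1 : (B ^ (-(1 / 2) : ℝ)) ^ 2 = B⁻¹ := by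
    rw [← Real.rpow_natCast, ← Real.rpow_mul hB.le, ← Real.rpow_neg_one]
    norm_num
  have e2 : (lam ^ (-((n : ℝ) - 1) / 4)) ^ 2 = (lam ^ (((n : ℝ) - 1) / 2))⁻¹ := by
    rw [← Real.rpow_natCast, ← Real.rpow_mul hlam.le, ← Real.rpow_neg hlam.le]
    congr 1
    push_cast
    ring
  rw [mul_pow, e1, e2, ← mul_inv, inv_le_iff_one_le_mul₀ (by positivity)]
  calc (1 : ℝ) ≤ _ := h1
    _ = _ := by ring
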